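/- Let k be an algebraically closed field, let (A,m,k) be the local ring of an algebraic variety over k, let I be an ideal of A, and let h ∈ A. Then h belongs to the integral closure Ī of I if and only if for every k-algebra homomorphism ρ : A → k[[z]] with ρ(m) ⊆ (z), one has ρ(h) ∈ ρ(I)·k[[z]] (the ideal of k[[z]] generated by the image of I). -/

import Mathlib

/-- `a` is integral over the ideal `I`: `a^n + c_1 a^{n-1} + ⋯ + c_n = 0` with `c_i ∈ I^i`.
The set of such elements is the integral closure `Ī` of `I`. -/
def IntegralOverIdeal {A : Type*} [CommRing A] (I : Ideal A) (a : A) : Prop :=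
  ∃ n : ℕ, 0 < n ∧ ∃ c : ℕ → A, (∀ i, c i ∈ I ^ i) ∧
    a ^ n + ∑ i ∈ Finset.Icc 1 n, c i * a ^ (n - i) = 0

/-!
If `h` is integral over `I` and `ρ` is an arc, then `ρ h` is integral over the principal ideal
`I · k[[z]]`, hence lies in it because `k[[z]]` is integrally closed.

Conversely, the fractions `g / h` with `g ∈ I` generate the unit ideal of `A[I/h] ⊆ A[1/h]` exactly
when `h` is integral over `I`. If `h` is not integral, some maximal ideal `N` of `A[I/h]` contains
all these fractions, and its residue field is still `k`. An arc `ρ : A[I/h] → k[[z]]` centred at `N`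
with `ρ h ≠ 0` then satisfies `ρ g = ρ (g / h) ρ h ∈ (z ρ h)` for all `g ∈ I`, so
`ρ h ∉ ρ(I) k[[z]]`.

The arc exists because a prime of the local ring at `N` that is maximal among those avoiding `h` has
a quotient of dimension at most one. By the Krull–Akizuki theorem a valuation ring dominating this
quotient inside its fraction field is discrete with residue field finite over `k`, hence equal to
`k`, and its elements expand as power series in a uniformizer.
-/

open IsLocalRing
open scoped Pointwise PowerSeries nonZeroDivisors

section KrullAkizuki

lemma exists_forall_le_succ_sup_of_antitone {R M : Type*} [Ring R] [AddCommGroup M] [Module R M]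
    (L : Submodule R M) [IsArtinian R (M ⧸ L)] {J : ℕ → Submodule R M} (hJ : Antitone J) :
    ∃ s, ∀ n, s ≤ n → J n ≤ J (n + 1) ⊔ L := by
  let F : ℕ →o (Submodule R (M ⧸ L))ᵒᵈ :=
    ⟨fun n => OrderDual.toDual ((J n).map L.mkQ), fun _ _ h => Submodule.map_mono (hJ h)⟩
  obtain ⟨s, hs⟩ := IsArtinian.monotone_stabilizes F
  refine ⟨s, fun n hn => ?_⟩
  have hmap : (J n).map L.mkQ = (J (n + 1)).map L.mkQ :=
    (hs n hn).symm.trans (hs (n + 1) (hn.trans n.le_succ))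
  calc J n ≤ ((J n).map L.mkQ).comap L.mkQ := Submodule.le_comap_map _ _
    _ = J (n + 1) ⊔ L := by rw [hmap, Submodule.comap_map_mkQ, sup_comm]

variable {R M : Type*} [CommRing R] [AddCommGroup M] [Module R M] {a : R} {N : Submodule R M}

lemma exists_forall_exists_pow_smul_sub_mem [IsArtinian R (QuotSMulTop a N)]
    (ha : IsSMulRegular M a) (hN : ∀ v : M, ∃ (n : ℕ) (w : M), a ^ n • v - a ^ (n + 1) • w ∈ N) :
    ∃ s : ℕ, ∀ v : M, ∃ w : M, a ^ s • v - a ^ (s + 1) • w ∈ N := by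
  let J : ℕ → Submodule R N := fun n => (a ^ n • ⊤ : Submodule R M).comap N.subtype
  have hJ : Antitone J := antitone_nat_of_succ_le fun n => Submodule.comap_mono <| by
    rw [pow_succ, mul_smul]
    exact smul_mono_right _ le_top
  obtain ⟨s, hs⟩ := exists_forall_le_succ_sup_of_antitone (a • ⊤) hJ
  have descend : ∀ n, s ≤ n → ∀ v : M, (∃ w, a ^ (n + 1) • v - a ^ (n + 1 + 1) • w ∈ N) →
      ∃ w, a ^ n • v - a ^ (n + 1) • w ∈ N := by
    rintro n hn v ⟨w, hw⟩
    have hmem : ⟨_, hw⟩ ∈ J (n + 1) :=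
      (Submodule.mem_smul_pointwise_iff_exists _ _ _).2
        ⟨v - a • w, trivial, by simp only [smul_sub, pow_succ, mul_smul, Submodule.subtype_apply]⟩
    obtain ⟨⟨y, hy⟩, ⟨u, -, hu⟩, _, ⟨z, -, rfl⟩, hyz⟩ :=
      Submodule.mem_sup.1 (hs (n + 1) (by lia) hmem)
    have hyz : y + a • (z : M) = a ^ (n + 1) • v - a ^ (n + 1 + 1) • w := congr_arg Subtype.val hyz
    have hu : a ^ (n + 1 + 1) • u = y := hu
    have hz : a • (a ^ n • v - a ^ (n + 1) • (u + w)) = a • (z : M) := by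
      linear_combination (norm := module) -hyz - hu
    exact ⟨u + w, ha hz ▸ z.2⟩
  refine ⟨s, fun v => ?_⟩
  obtain ⟨n, w, hw⟩ := hN v
  rcases le_total n s with hns | hsn
  · refine ⟨w, ?_⟩
    convert! N.smul_mem (a ^ (s - n)) hw using 1
    rw [smul_sub, ← mul_smul, ← mul_smul, ← pow_add, ← pow_add, ← add_assoc, Nat.sub_add_cancel hns]
  · exact Nat.decreasingInduction' (P := fun m => ∃ w, a ^ m • v - a ^ (m + 1) • w ∈ N)
      (fun m _ hm => descend m hm v) hsn ⟨w, hw⟩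

lemma isNoetherian_quotSMulTop_of_forall_exists_pow_smul_sub_mem [IsNoetherian R N]
    (ha : IsSMulRegular M a) {s : ℕ} (hN : ∀ v : M, ∃ w : M, a ^ s • v - a ^ (s + 1) • w ∈ N) :
    IsNoetherian R (QuotSMulTop a M) := by
  let π : M →ₗ[R] QuotSMulTop (a ^ (s + 1)) M := Submodule.mkQ _
  let μ : M →ₗ[R] QuotSMulTop (a ^ (s + 1)) M := a ^ s • π
  have hker : LinearMap.ker μ ≤ a • ⊤ := by
    intro v hv
    have hv : π (a ^ s • v) = 0 := by rw [map_smul]; exact hv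
    rw [Submodule.mkQ_apply, Submodule.Quotient.mk_eq_zero,
      Submodule.mem_smul_pointwise_iff_exists] at hv
    obtain ⟨w, -, hw⟩ := hv
    rw [pow_succ, mul_smul] at hw
    exact (Submodule.mem_smul_pointwise_iff_exists _ _ _).2 ⟨w, trivial, ha.pow s hw⟩
  have hrange : LinearMap.range μ ≤ N.map π := by
    rintro _ ⟨v, rfl⟩
    obtain ⟨w, hw⟩ := hN v
    have hπw : π (a ^ (s + 1) • w) = 0 := (Submodule.Quotient.mk_eq_zero _).2 <|
      Submodule.smul_mem_pointwise_smul w _ _ trivial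
    exact ⟨_, hw, by rw [map_sub, hπw, sub_zero, map_smul]; rfl⟩
  have : IsNoetherian R (LinearMap.range μ) := isNoetherian_of_le hrange
  have : IsNoetherian R (M ⧸ LinearMap.ker μ) :=
    isNoetherian_of_linearEquiv μ.quotKerEquivRange.symm
  exact isNoetherian_of_surjective _ (LinearMap.range_eq_top.2 (Submodule.factor_surjective hker))

lemma isArtinianRing_quotient_of_ne_bot [IsNoetherianRing R] [Ring.DimensionLEOne R] {J : Ideal R}
    (hJ : J ≠ ⊥) : IsArtinianRing (R ⧸ J) := by
  have : Ring.KrullDimLE 0 (R ⧸ J) := Ring.krullDimLE_zero_iff.2 fun q hq => by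
    have hne : q.comap (Ideal.Quotient.mk J) ≠ ⊥ := fun h => hJ <| eq_bot_iff.2 <|
      h ▸ by simpa using Ideal.ker_le_comap (K := q) (Ideal.Quotient.mk J)
    exact Ideal.isMaximal_of_isIntegral_of_isMaximal_comap q
      (Ring.DimensionLEOne.maximalOfPrime hne inferInstance)
  exact IsNoetherianRing.isArtinianRing_of_krullDimLE_zero

lemma isArtinian_quotSMulTop_of_ne_zero [IsNoetherianRing R] [Ring.DimensionLEOne R]
    [Module.Finite R M] (ha : a ≠ 0) : IsArtinian R (QuotSMulTop a M) := by
  have := isArtinianRing_quotient_of_ne_bot (mt Ideal.span_singleton_eq_bot.1 ha)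
  have := Module.Finite.of_restrictScalars_finite R (R ⧸ Ideal.span {a}) (QuotSMulTop a M)
  have := isArtinian_of_fg_of_artinian' (R := R ⧸ Ideal.span {a}) (M := QuotSMulTop a M)
  exact isArtinian_of_surjective_algebraMap (R := R ⧸ Ideal.span {a}) Ideal.Quotient.mk_surjective

variable [IsDomain R] {V : Type*} [CommRing V] [Algebra R V] [Module.IsTorsionFree R V]

lemma exists_ne_zero_algebraMap_mem_of_isTorsion_quotient_one
    (hV : Module.IsTorsion R (V ⧸ (1 : Submodule R V))) {J : Ideal V} (hJ : J ≠ ⊥) :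
    ∃ r : R, r ≠ 0 ∧ algebraMap R V r ∈ J := by
  obtain ⟨v, hvJ, hv⟩ := Submodule.exists_mem_ne_zero_of_ne_bot hJ
  obtain ⟨y, hy⟩ := @hV (Submodule.Quotient.mk v)
  obtain ⟨r, hr⟩ := Submodule.mem_one.1 ((Submodule.Quotient.mk_eq_zero _).1 hy)
  change algebraMap R V r = (y : R) • v at hr
  refine ⟨r, ?_, hr ▸ Submodule.smul_of_tower_mem J (y : R) hvJ⟩
  rintro rfl
  rw [map_zero, eq_comm] at hr
  exact smul_ne_zero (nonZeroDivisors.coe_ne_zero y) hv hr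

variable [IsNoetherianRing R] [Ring.DimensionLEOne R]

lemma exists_pow_smul_sub_mem_of_isTorsion (hN : Module.IsTorsion R (M ⧸ N)) (a : R) (v : M) :
    ∃ (n : ℕ) (w : M), a ^ n • v - a ^ (n + 1) • w ∈ N := by
  obtain ⟨y, hy⟩ := @hN (Submodule.Quotient.mk v)
  have hyv : (y : R) • v ∈ N := (Submodule.Quotient.mk_eq_zero N).1 hy
  have := isArtinianRing_quotient_of_ne_bot
    (mt Ideal.span_singleton_eq_bot.1 (nonZeroDivisors.coe_ne_zero y))
  obtain ⟨n, t, ht⟩ := IsArtinian.exists_pow_succ_smul_dvd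
    (Ideal.Quotient.mk (Ideal.span {(y : R)}) a) (1 : R ⧸ Ideal.span {(y : R)})
  obtain ⟨t, rfl⟩ := Ideal.Quotient.mk_surjective t
  obtain ⟨c, hc⟩ : (y : R) ∣ a ^ n - a ^ (n + 1) * t := by
    rw [← Ideal.mem_span_singleton, ← Ideal.Quotient.eq]
    simpa using ht.symm
  refine ⟨n, t • v, ?_⟩
  rw [← mul_smul, ← sub_smul, hc, mul_comm, mul_smul]
  exact N.smul_mem c hyv

lemma isNoetherian_quotSMulTop_of_isTorsion [Module.IsTorsionFree R M] (hfg : N.FG)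
    (hN : Module.IsTorsion R (M ⧸ N)) (ha : a ≠ 0) : IsNoetherian R (QuotSMulTop a M) := by
  have hreg : IsSMulRegular M a := Module.IsTorsionFree.isSMulRegular (IsRegular.of_ne_zero ha)
  have : Module.Finite R N := Module.Finite.iff_fg.2 hfg
  have := isArtinian_quotSMulTop_of_ne_zero (M := N) ha
  obtain ⟨s, hs⟩ := exists_forall_exists_pow_smul_sub_mem hreg
    (exists_pow_smul_sub_mem_of_isTorsion hN a)
  exact isNoetherian_quotSMulTop_of_forall_exists_pow_smul_sub_mem hreg hs

lemma isNoetherian_quotient_of_isTorsion_quotient_one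
    (hV : Module.IsTorsion R (V ⧸ (1 : Submodule R V))) {J : Ideal V} (hJ : J ≠ ⊥) :
    IsNoetherian R (V ⧸ J) := by
  obtain ⟨r, hr0, hrJ⟩ := exists_ne_zero_algebraMap_mem_of_isTorsion_quotient_one hV hJ
  have := isNoetherian_quotSMulTop_of_isTorsion ⟨{1}, by simp [Submodule.one_eq_span]⟩ hV hr0
  have hle : r • (⊤ : Submodule R V) ≤ J.restrictScalars R := by
    rintro _ ⟨v, -, rfl⟩
    change r • v ∈ J
    rw [Algebra.smul_def]
    exact J.mul_mem_right v hrJ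
  have hN : IsNoetherian R (V ⧸ J.restrictScalars R) :=
    isNoetherian_of_surjective (M := QuotSMulTop r V) _
      (LinearMap.range_eq_top.2 (Submodule.factor_surjective hle))
  exact isNoetherian_of_linearEquiv (Submodule.Quotient.restrictScalarsEquiv R J)

/-- The **Krull–Akizuki theorem** for birational extensions. -/
theorem isNoetherianRing_of_isTorsion_quotient_one
    (hV : Module.IsTorsion R (V ⧸ (1 : Submodule R V))) :
    IsNoetherianRing V := by
  refine (isNoetherianRing_iff_ideal_fg V).2 fun J => ?_
  rcases eq_or_ne J ⊥ with rfl | hJ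
  · exact Submodule.fg_bot
  obtain ⟨v, hvJ, hv⟩ := Submodule.exists_mem_ne_zero_of_ne_bot hJ
  have : IsNoetherian V (V ⧸ Ideal.span {v}) := isNoetherian_of_tower R
    (isNoetherian_quotient_of_isTorsion_quotient_one hV (mt Ideal.span_singleton_eq_bot.1 hv))
  refine Submodule.fg_of_fg_map_of_fg_inf_ker (Ideal.span {v}).mkQ (IsNoetherian.noetherian _) ?_
  rw [Submodule.ker_mkQ, inf_eq_right.2 ((Ideal.span_singleton_le_iff_mem J).2 hvJ)]
  exact Submodule.fg_span_singleton v

end KrullAkizuki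

section Dimension

variable {R : Type*} [CommRing R] [IsNoetherianRing R]

lemma exists_mem_forall_minimalPrimes_notMem {I P : Ideal R} [P.IsPrime] (hIP : I ≤ P)
    (hP : P ∉ I.minimalPrimes) : ∃ y ∈ P, ∀ q ∈ I.minimalPrimes, y ∉ q := by
  have hfin := Ideal.finite_minimalPrimes_of_isNoetherianRing R I
  have hnot : ¬ (P : Set R) ⊆ ⋃ q ∈ I.minimalPrimes, (q : Set R) := by
    rw [Ideal.subset_union_prime_finite (f := fun q : Ideal R => q) hfin ⊥ ⊥
      fun q hq _ _ => hq.1.1]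
    rintro ⟨q, hq, hle⟩
    exact hP (hle.antisymm (hq.2 ⟨‹_›, hIP⟩ hle) ▸ hq)
  simpa [Set.not_subset] using hnot

variable [IsDomain R]

lemma mem_minimalPrimes_span_singleton {a : R} (ha0 : a ≠ 0)
    (ha : ∀ q : Ideal R, q.IsPrime → q ≠ ⊥ → a ∈ q) {P : Ideal R} [hP : P.IsPrime] (hP0 : P ≠ ⊥) :
    P ∈ (Ideal.span {a}).minimalPrimes := by
  by_contra hmin
  have le_iff : ∀ q : Ideal R, ∀ b, Ideal.span {b} ≤ q ↔ b ∈ q := fun q b =>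
    Ideal.span_singleton_le_iff_mem q
  obtain ⟨y, hyP, hy⟩ := exists_mem_forall_minimalPrimes_notMem ((le_iff P a).2 (ha P hP hP0)) hmin
  obtain ⟨Q, hQ, -⟩ := Ideal.exists_minimalPrimes_le ((le_iff P y).2 hyP)
  have hQprime : Q.IsPrime := hQ.1.1
  have hyQ : y ∈ Q := (le_iff Q y).1 hQ.1.2
  have hQ0 : Q ≠ ⊥ := by
    rintro rfl
    obtain ⟨q, hq, -⟩ := Ideal.exists_minimalPrimes_le ((le_iff P a).2 (ha P hP hP0))
    exact hy q hq ((Ideal.mem_bot.1 hyQ) ▸ q.zero_mem)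
  obtain ⟨q, hq, hqQ⟩ := Ideal.exists_minimalPrimes_le ((le_iff Q a).2 (ha Q hQprime hQ0))
  have hq0 : q.height < ((1 : ℕ) : ℕ∞) := Ideal.height_le_iff.1
    (mod_cast Ideal.height_le_one_of_isPrincipal_of_mem_minimalPrimes _ _ hQ) q hq.1.1
    (hqQ.lt_of_ne fun h => hy q hq (h ▸ hyQ))
  have hq_bot : q = ⊥ := Ideal.height_eq_zero_iff_eq_bot.1 (by simpa using hq0)
  exact ha0 (by simpa [hq_bot] using hq.1.2)

lemma dimensionLEOne_of_forall_isPrime_mem {a : R} (ha0 : a ≠ 0)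
    (ha : ∀ q : Ideal R, q.IsPrime → q ≠ ⊥ → a ∈ q) : Ring.DimensionLEOne R where
  maximalOfPrime {P} hP0 hP := by
    obtain ⟨m, hm, hPm⟩ := P.exists_le_maximal hP.ne_top
    have hm0 : m ≠ ⊥ := fun h => hP0 (eq_bot_iff.2 (h ▸ hPm))
    have hmP := (mem_minimalPrimes_span_singleton ha0 ha hm0 (hP := hm.isPrime)).2
      (mem_minimalPrimes_span_singleton ha0 ha hP0).1 hPm
    exact hPm.antisymm hmP ▸ hm

end Dimension

lemma exists_isPrime_notMem_dimensionLEOne_quotient {R : Type*} [CommRing R] [IsNoetherianRing R]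
    {a : R} (ha : ¬ IsNilpotent a) :
    ∃ P : Ideal R, P.IsPrime ∧ a ∉ P ∧ Ring.DimensionLEOne (R ⧸ P) := by
  have hne : ∃ P : Ideal R, P.IsPrime ∧ a ∉ P := by
    simpa [nilpotent_iff_mem_prime] using ha
  obtain ⟨P, ⟨hP, haP⟩, hmax⟩ := set_has_maximal_iff_noetherian.2 ‹IsNoetherianRing R›
    {P : Ideal R | P.IsPrime ∧ a ∉ P} hne
  refine ⟨P, hP, haP, dimensionLEOne_of_forall_isPrime_mem (a := Ideal.Quotient.mk P a)
    (by rwa [Ne, Ideal.Quotient.eq_zero_iff_mem]) fun q hq hq0 => ?_⟩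
  by_contra haq
  have hPq : P ≤ q.comap (Ideal.Quotient.mk P) := by
    simpa using Ideal.ker_le_comap (K := q) (Ideal.Quotient.mk P)
  refine hmax (q.comap (Ideal.Quotient.mk P)) ⟨inferInstance, haq⟩ (hPq.lt_of_ne fun h => hq0 ?_)
  rw [← Ideal.map_comap_of_surjective _ Ideal.Quotient.mk_surjective q, ← h,
    Ideal.map_quotient_self]

section Expansion

variable (k : Type*) {V : Type*} [Field k] [CommRing V] [Algebra k V] (p : V)

lemma pow_dvd_aeval_trunc_mul_sub (F G : k⟦X⟧) (n : ℕ) :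
    p ^ n ∣ Polynomial.aeval p (F.trunc n) * Polynomial.aeval p (G.trunc n) -
      Polynomial.aeval p ((F * G).trunc n) := by
  have hX : (Polynomial.X : Polynomial k) ^ n ∣ F.trunc n * G.trunc n - (F * G).trunc n := by
    refine Polynomial.X_pow_dvd_iff.2 fun d hd => ?_
    rw [Polynomial.coeff_sub, PowerSeries.coeff_trunc, if_pos hd,
      PowerSeries.coeff_mul_eq_coeff_trunc_mul_trunc F G hd, ← Polynomial.coeff_coe,
      Polynomial.coe_mul, sub_self]
  simpa using map_dvd (Polynomial.aeval p) hX

/-- The graph of power series expansion along `p`: the pairs `(v, F)` such that every truncation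
`∑ i < n, Fᵢ pⁱ` is congruent to `v` modulo `pⁿ`. Single-valuedness and totality of expansion become
bijectivity of the first projection. -/
def expansionSubalgebra : Subalgebra k (V × k⟦X⟧) where
  carrier := {x | ∀ n, p ^ n ∣ x.1 - Polynomial.aeval p (x.2.trunc n)}
  mul_mem' {x y} hx hy n := by
    have h := ((hx n).mul_right y.1).add <| ((hy n).mul_left (Polynomial.aeval p (x.2.trunc n))).add
      (pow_dvd_aeval_trunc_mul_sub k p x.2 y.2 n)
    convert! h using 1
    simp only [Prod.fst_mul, Prod.snd_mul]
    ring
  add_mem' {x y} hx hy n := by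
    convert! (hx n).add (hy n) using 1
    simp only [Prod.fst_add, Prod.snd_add, map_add]
    ring
  algebraMap_mem' c n := by
    rcases n with _ | n <;> simp [PowerSeries.trunc_C]

variable {k p}

lemma eq_zero_of_mk_zero_mem_expansionSubalgebra (hreg : IsLeftRegular p)
    (hp : ¬ IsUnit p) {F : k⟦X⟧} (hF : (0, F) ∈ expansionSubalgebra k p) : F = 0 := by
  ext n
  induction n using Nat.strong_induction_on with
  | _ n ih =>
    have htrunc : F.trunc n = 0 := by
      ext i
      rw [PowerSeries.coeff_trunc]
      split_ifs with hi
      exacts [by simpa using ih i hi, rfl]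
    obtain ⟨w, hw⟩ : p ^ n * p ∣ p ^ n * algebraMap k V (F.coeff n) := by
      simpa [PowerSeries.trunc_succ, htrunc, Polynomial.aeval_monomial, pow_succ,
        mul_comm (algebraMap k V _)] using hF (n + 1)
    have hdvd : p ∣ algebraMap k V (F.coeff n) := ⟨w, hreg.pow n (by simpa [mul_assoc] using hw)⟩
    by_contra h0
    exact hp (isUnit_of_dvd_unit hdvd ((IsUnit.mk0 _ h0).map _))

lemma exists_mk_mem_expansionSubalgebra
    (hres : ∀ v : V, ∃ c : k, p ∣ v - algebraMap k V c) (v : V) :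
    ∃ F : k⟦X⟧, (v, F) ∈ expansionSubalgebra k p := by
  choose c q hq using hres
  refine ⟨PowerSeries.mk fun i => c (q^[i] v), fun n => ⟨q^[n] v, ?_⟩⟩
  induction n with
  | zero => simp
  | succ n ih =>
    rw [PowerSeries.trunc_succ, map_add, ← sub_sub, ih, Polynomial.aeval_monomial,
      PowerSeries.coeff_mk, Function.iterate_succ_apply', pow_succ, mul_assoc, ← hq]
    ring

theorem exists_algHom_powerSeries_of_residue (hreg : IsLeftRegular p) (hp : ¬ IsUnit p)
    (hres : ∀ v : V, ∃ c : k, p ∣ v - algebraMap k V c) :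
    ∃ f : V →ₐ[k] k⟦X⟧, ∀ v, f v = 0 → ∀ n, p ^ n ∣ v := by
  let E := expansionSubalgebra k p
  let π : E →ₐ[k] V := (AlgHom.fst k V k⟦X⟧).comp E.val
  have hinj : Function.Injective π := (injective_iff_map_eq_zero π).2 <| by
    rintro ⟨⟨v, F⟩, hF⟩ (rfl : v = 0)
    obtain rfl := eq_zero_of_mk_zero_mem_expansionSubalgebra hreg hp hF
    rfl
  have hsurj : Function.Surjective π := fun v =>
    let ⟨F, hF⟩ := exists_mk_mem_expansionSubalgebra hres v
    ⟨⟨(v, F), hF⟩, rfl⟩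
  let e : E ≃ₐ[k] V := AlgEquiv.ofBijective π ⟨hinj, hsurj⟩
  refine ⟨(AlgHom.snd k V k⟦X⟧).comp (E.val.comp e.symm), fun v hv n => ?_⟩
  have hfst : (e.symm v : V × k⟦X⟧).1 = v := e.apply_symm_apply v
  have hsnd : (e.symm v : V × k⟦X⟧).2 = 0 := hv
  simpa [hfst, hsnd] using (e.symm v).2 n

end Expansion

section DimensionOne

lemma exists_injective_algHom_powerSeries_of_isDiscreteValuationRing {k V : Type*} [Field k]
    [CommRing V] [IsDomain V] [IsDiscreteValuationRing V] [Algebra k V]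
    (hres : Function.Surjective (algebraMap k (ResidueField V))) :
    ∃ f : V →ₐ[k] k⟦X⟧, Function.Injective f := by
  obtain ⟨p, hp⟩ := IsDiscreteValuationRing.exists_irreducible V
  obtain ⟨f, hf⟩ := exists_algHom_powerSeries_of_residue (k := k)
    (IsRegular.of_ne_zero hp.ne_zero).left hp.not_isUnit fun v => by
      obtain ⟨c, hc⟩ := hres (residue V v)
      refine ⟨c, ?_⟩
      rw [← Ideal.mem_span_singleton, ← hp.maximalIdeal_eq, ← residue_eq_zero_iff, map_sub, ← hc,
        sub_eq_zero]
      rfl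
  refine ⟨f, (injective_iff_map_eq_zero f).2 fun v hv => ?_⟩
  by_contra hv0
  obtain ⟨n, hn⟩ := FiniteMultiplicity.of_not_isUnit hp.not_isUnit hv0
  exact hn (hf v hv (n + 1))

lemma isTorsion_quotient_one_of_isFractionRing {R V : Type*} (K : Type*) [CommRing R]
    [CommRing V] [Field K] [Algebra R V] [Algebra V K] [Algebra R K] [IsScalarTower R V K]
    [IsFractionRing R K] [FaithfulSMul V K] : Module.IsTorsion R (V ⧸ (1 : Submodule R V)) := by
  intro v
  obtain ⟨v, rfl⟩ := Submodule.Quotient.mk_surjective _ v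
  obtain ⟨⟨x, y⟩, hxy⟩ := IsLocalization.surj (nonZeroDivisors R) (algebraMap V K v)
  refine ⟨y, (Submodule.Quotient.mk_eq_zero _).2 (Submodule.mem_one.2 ⟨x, ?_⟩)⟩
  apply FaithfulSMul.algebraMap_injective V K
  rw [← IsScalarTower.algebraMap_apply, ← hxy]
  change _ = algebraMap V K ((y : R) • v)
  rw [Algebra.smul_def, map_mul, ← IsScalarTower.algebraMap_apply, mul_comm]

variable {k R V : Type*} [Field k] [CommRing R] [IsLocalRing R] [Algebra k R] [CommRing V]

lemma surjective_algebraMap_residueField_of_finite [IsAlgClosed k] [IsLocalRing V] [Algebra k V]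
    [Algebra R V] [IsScalarTower k R V] [IsLocalHom (algebraMap R V)]
    [Module.Finite R (ResidueField V)]
    (hres : Function.Surjective (algebraMap k (ResidueField R))) :
    Function.Surjective (algebraMap k (ResidueField V)) := by
  have : Algebra.IsIntegral k (ResidueField R) :=
    Algebra.isIntegral_of_surjective hres
  have : Algebra.IsIntegral (ResidueField R) (ResidueField V) := Algebra.IsIntegral.tower_top R
  have : Algebra.IsIntegral k (ResidueField V) := Algebra.IsIntegral.trans (ResidueField R)
  exact IsAlgClosed.algebraMap_bijective_of_isIntegral.2

lemma isDiscreteValuationRing_of_isTorsion_quotient_one [IsNoetherianRing R] [IsDomain R]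
    [Ring.DimensionLEOne R] (hR : ¬ IsField R) [IsDomain V] [ValuationRing V] [Algebra R V]
    [Module.IsTorsionFree R V] [IsLocalHom (algebraMap R V)]
    (hV : Module.IsTorsion R (V ⧸ (1 : Submodule R V))) : IsDiscreteValuationRing V := by
  have := isNoetherianRing_of_isTorsion_quotient_one hV
  have hfield : ¬ IsField V := by
    rw [isField_iff_maximalIdeal_eq, eq_bot_iff] at hR ⊢
    refine fun hmV => hR fun x hx => ?_
    have hxV : algebraMap R V x = 0 :=
      hmV (map_maximalIdeal_le (algebraMap R V) (Ideal.mem_map_of_mem _ hx))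
    rwa [Algebra.algebraMap_eq_smul_one, smul_eq_zero_iff_left one_ne_zero] at hxV
  exact ((IsDiscreteValuationRing.TFAE V hfield).out 0 1).2 ‹_›

lemma exists_injective_algHom_powerSeries_of_isField (hR : IsField R)
    (hres : Function.Surjective (algebraMap k (ResidueField R))) :
    ∃ f : R →ₐ[k] k⟦X⟧, Function.Injective f := by
  let e : k ≃ₐ[k] ResidueField R :=
    AlgEquiv.ofBijective (Algebra.ofId k _) ⟨(algebraMap k _).injective, hres⟩
  have hinj : Function.Injective (algebraMap R (ResidueField R)) := by
    rw [RingHom.injective_iff_ker_eq_bot, ResidueField.algebraMap_eq, ker_residue]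
    exact isField_iff_maximalIdeal_eq.1 hR
  refine ⟨(Algebra.ofId k k⟦X⟧).comp
    (e.symm.toAlgHom.comp (IsScalarTower.toAlgHom k R (ResidueField R))), ?_⟩
  exact (algebraMap k k⟦X⟧).injective.comp (e.symm.injective.comp hinj)

theorem exists_injective_algHom_powerSeries_of_dimensionLEOne [IsAlgClosed k] [IsNoetherianRing R]
    [IsDomain R] [Ring.DimensionLEOne R]
    (hres : Function.Surjective (algebraMap k (ResidueField R))) :
    ∃ f : R →ₐ[k] k⟦X⟧, Function.Injective f := by
  by_cases hR : IsField R
  · exact exists_injective_algHom_powerSeries_of_isField hR hres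
  obtain ⟨V, hV, hloc⟩ := exists_factor_valuationRing (algebraMap R (FractionRing R))
  let f : R →+* V := (algebraMap R (FractionRing R)).codRestrict V.toSubring hV
  let : Algebra R V := f.toAlgebra
  let : Algebra k V := (f.comp (algebraMap k R)).toAlgebra
  have : IsScalarTower k R V := IsScalarTower.of_algebraMap_eq fun _ => rfl
  have : IsScalarTower R V (FractionRing R) := IsScalarTower.of_algebraMap_eq fun _ => rfl
  have : IsLocalHom (algebraMap R V) := hloc
  have hinj : Function.Injective (algebraMap R V) :=
    .of_comp (f := algebraMap V (FractionRing R)) (IsFractionRing.injective R (FractionRing R))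
  have : Module.IsTorsionFree R V := Module.isTorsionFree_iff_algebraMap_injective.2 hinj
  have htor := isTorsion_quotient_one_of_isFractionRing (R := R) (V := V) (FractionRing R)
  have := isDiscreteValuationRing_of_isTorsion_quotient_one hR htor
  have : Module.Finite R (ResidueField V) :=
    have : IsNoetherian R (V ⧸ maximalIdeal V) :=
      isNoetherian_quotient_of_isTorsion_quotient_one htor
        (IsDiscreteValuationRing.not_a_field V)
    inferInstanceAs (Module.Finite R (V ⧸ maximalIdeal V))
  obtain ⟨g, hg⟩ := exists_injective_algHom_powerSeries_of_isDiscreteValuationRing (V := V)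
    (surjective_algebraMap_residueField_of_finite hres)
  exact ⟨g.comp (IsScalarTower.toAlgHom k R V), hg.comp hinj⟩

end DimensionOne

section Arcs

variable {k : Type*} [Field k]

lemma X_dvd_of_mem_maximalIdeal {A : Type*} [CommRing A] [IsLocalRing A] [Algebra k A]
    (ρ : A →ₐ[k] k⟦X⟧) {x : A} (hx : x ∈ maximalIdeal A) : PowerSeries.X ∣ ρ x := by
  let ε : A →+* k := PowerSeries.constantCoeff.comp (ρ : A →+* k⟦X⟧)
  have hε : Function.Surjective ε := fun c => ⟨algebraMap k A c, by simp [ε]⟩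
  rw [← eq_maximalIdeal (RingHom.ker_isMaximal_of_surjective ε hε)] at hx
  exact PowerSeries.X_dvd_iff.2 hx

variable [IsAlgClosed k]

lemma exists_algHom_powerSeries_ne_zero_of_not_isNilpotent {R : Type*} [CommRing R]
    [IsNoetherianRing R] [IsLocalRing R] [Algebra k R]
    (hres : Function.Surjective (algebraMap k (ResidueField R))) {a : R} (ha : ¬ IsNilpotent a) :
    ∃ ρ : R →ₐ[k] k⟦X⟧, ρ a ≠ 0 := by
  obtain ⟨P, hP, haP, hdim⟩ := exists_isPrime_notMem_dimensionLEOne_quotient ha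
  have hsurj : Function.Surjective (algebraMap R (R ⧸ P)) := Ideal.Quotient.mk_surjective
  have : IsLocalRing (R ⧸ P) := .of_surjective' _ hsurj
  have : IsLocalHom (algebraMap R (R ⧸ P)) := .of_surjective _ hsurj
  obtain ⟨f, hf⟩ := exists_injective_algHom_powerSeries_of_dimensionLEOne (R := R ⧸ P)
    (surjective_algebraMap_residueField_of_finite hres)
  refine ⟨f.comp (Ideal.Quotient.mkₐ k P), ?_⟩
  rwa [AlgHom.comp_apply, Ne, map_eq_zero_iff f hf, Ideal.Quotient.mkₐ_eq_mk,
    Ideal.Quotient.eq_zero_iff_mem]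

theorem exists_algHom_powerSeries_ne_zero_of_isMaximal {B : Type*} [CommRing B]
    [IsNoetherianRing B] [Algebra k B] (N : Ideal B) [N.IsMaximal]
    (hres : Function.Surjective (algebraMap k (B ⧸ N))) {a : B} (ha : a ∈ nonZeroDivisors B) :
    ∃ ρ : B →ₐ[k] k⟦X⟧, (∀ x ∈ N, PowerSeries.X ∣ ρ x) ∧ ρ a ≠ 0 := by
  let C := Localization.AtPrime N
  have hresC : Function.Surjective (algebraMap k (ResidueField C)) := by
    rw [IsScalarTower.algebraMap_eq k (B ⧸ N) (ResidueField C), RingHom.coe_comp]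
    exact N.bijective_algebraMap_quotient_residueField.2.comp hres
  have hnil : ¬ IsNilpotent (algebraMap B C a) := by
    rintro ⟨n, hn⟩
    rw [← map_pow, IsLocalization.map_eq_zero_iff N.primeCompl] at hn
    obtain ⟨s, hs⟩ := hn
    have hs0 : (s : B) = 0 := (mul_right_mem_nonZeroDivisors_eq_zero_iff (pow_mem ha n)).1 hs
    exact s.2 (hs0 ▸ N.zero_mem)
  have : IsNoetherianRing C := IsLocalization.isNoetherianRing N.primeCompl C inferInstance
  obtain ⟨ρ, hρ⟩ := exists_algHom_powerSeries_ne_zero_of_not_isNilpotent hresC hnil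
  exact ⟨ρ.comp (IsScalarTower.toAlgHom k B C), fun x hx => X_dvd_of_mem_maximalIdeal ρ <|
    (IsLocalization.AtPrime.to_map_mem_maximal_iff C N x).2 hx, hρ⟩

end Arcs

section IntegralDependence

lemma isIntegral_of_pow_add_sum_eq_zero {R S : Type*} [CommRing R] [CommRing S] [Algebra R S]
    {n : ℕ} {y : S} {d : ℕ → R}
    (h : y ^ n + ∑ i ∈ Finset.Icc 1 n, algebraMap R S (d i) * y ^ (n - i) = 0) :
    IsIntegral R y := by
  let q : Polynomial R := ∑ i ∈ Finset.Icc 1 n, Polynomial.C (d i) * Polynomial.X ^ (n - i)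
  have hq : q.degree < n := by
    refine (Polynomial.degree_sum_le _ _).trans_lt <| (Finset.sup_lt_iff (WithBot.bot_lt_coe n)).2
      fun i hi => (Polynomial.degree_C_mul_X_pow_le _ _).trans_lt (Nat.cast_lt.2 ?_)
    have := Finset.mem_Icc.1 hi
    lia
  exact ⟨_, Polynomial.monic_X_pow_add hq, by simpa [q, Polynomial.eval₂_finsetSum] using h⟩

namespace IntegralOverIdeal

lemma map {A B : Type*} [CommRing A] [CommRing B] {I : Ideal A} {a : A}
    (h : IntegralOverIdeal I a) (f : A →+* B) : IntegralOverIdeal (I.map f) (f a) := by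
  obtain ⟨n, hn, c, hc, h0⟩ := h
  refine ⟨n, hn, fun i => f (c i), fun i => ?_, by simpa using congrArg f h0⟩
  rw [← Ideal.map_pow]
  exact Ideal.mem_map_of_mem f (hc i)

lemma dvd_of_span_singleton {V : Type*} [CommRing V] [IsDomain V] [IsIntegrallyClosed V] {g x : V}
    (hx : IntegralOverIdeal (Ideal.span {g}) x) : g ∣ x := by
  obtain ⟨n, hn, c, hc, h0⟩ := hx
  choose d hd using fun i => Ideal.mem_span_singleton.1 (Ideal.span_singleton_pow g i ▸ hc i)
  rcases eq_or_ne g 0 with rfl | hg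
  · have hsum : ∑ i ∈ Finset.Icc 1 n, c i * x ^ (n - i) = 0 := Finset.sum_eq_zero fun i hi => by
      have hi : i ≠ 0 := Nat.one_le_iff_ne_zero.1 (Finset.mem_Icc.1 hi).1
      rw [hd, zero_pow hi, zero_mul, zero_mul]
    rw [hsum, add_zero] at h0
    exact pow_eq_zero_iff hn.ne' |>.1 h0 ▸ dvd_rfl
  let K := FractionRing V
  have hgK : algebraMap V K g ≠ 0 := by simpa using hg
  obtain ⟨y, hy⟩ : ∃ y : K, algebraMap V K x = algebraMap V K g * y :=
    ⟨_, (mul_div_cancel₀ _ hgK).symm⟩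
  have hint : IsIntegral V y := by
    refine isIntegral_of_pow_add_sum_eq_zero (n := n) (d := d) <|
      mul_left_cancel₀ (pow_ne_zero n hgK) ?_
    rw [mul_zero, ← map_zero (algebraMap V K), ← h0, mul_add, Finset.mul_sum, map_add, map_sum,
      map_pow, hy, mul_pow]
    congr 1
    refine Finset.sum_congr rfl fun i hi => ?_
    rw [hd, map_mul, map_mul, map_pow, map_pow, hy, mul_pow,
      ← pow_sub_mul_pow _ (Finset.mem_Icc.1 hi).2]
    ring
  obtain ⟨z, rfl⟩ := IsIntegrallyClosed.isIntegral_iff.1 hint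
  exact ⟨z, IsFractionRing.injective V K (by rw [hy, map_mul])⟩

end IntegralOverIdeal

end IntegralDependence

section BlowupChart

variable {A : Type*} [CommRing A] {I : Ideal A} {h : A}

lemma exists_eval_reflect_eq_zero_of_aeval_invSelf_eq_zero {p : Polynomial A}
    (hp : Polynomial.aeval (IsLocalization.Away.invSelf (S := Localization.Away h) h) p = 0) :
    ∃ n, 0 < n ∧ p.natDegree ≤ n ∧ (p.reflect n).eval h = 0 := by
  set t := IsLocalization.Away.invSelf (S := Localization.Away h) h
  let _ : Invertible t := ⟨algebraMap A _ h, IsLocalization.Away.mul_invSelf h,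
    (mul_comm _ _).trans (IsLocalization.Away.mul_invSelf h)⟩
  have hrev : algebraMap A (Localization.Away h) (p.reverse.eval h) = 0 := by
    have hmul := Polynomial.eval₂_reverse_mul_pow (algebraMap A (Localization.Away h)) t p
    change _ = Polynomial.aeval t p at hmul
    rw [hp] at hmul
    rw [← ((isUnit_of_invertible t).pow p.natDegree).mul_left_eq_zero, ← hmul]
    exact congrArg (· * _) (Polynomial.eval₂_at_apply _ _).symm
  obtain ⟨⟨_, m, rfl⟩, hm⟩ := (IsLocalization.map_eq_zero_iff (Submonoid.powers h) _ _).1 hrev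
  refine ⟨m + 1 + p.natDegree, by lia, by lia, ?_⟩
  have hrefl := Polynomial.reflect_mul 1 p (F := m + 1) (by simp) le_rfl
  rw [one_mul] at hrefl
  rw [hrefl, Polynomial.reflect_one, Polynomial.eval_mul, Polynomial.eval_pow, Polynomial.eval_X,
    pow_succ', mul_assoc]
  exact (congrArg (h * ·) hm).trans (mul_zero h)

lemma IntegralOverIdeal.of_eval_reflect_eq_zero {p : Polynomial A} (hp : p ∈ reesAlgebra I)
    (hp0 : p.coeff 0 = 1) {n : ℕ} (hn : 0 < n) (hpn : p.natDegree ≤ n)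
    (h0 : (p.reflect n).eval h = 0) : IntegralOverIdeal I h := by
  refine ⟨n, hn, p.coeff, hp, ?_⟩
  have hdeg : (p.reflect n).natDegree < n + 1 :=
    Nat.lt_succ_iff.2 (Polynomial.natDegree_reflect_le.trans (max_le le_rfl hpn))
  calc h ^ n + ∑ i ∈ Finset.Icc 1 n, p.coeff i * h ^ (n - i)
      = ∑ i ∈ Finset.Icc 0 n, p.coeff i * h ^ (n - i) := by
        rw [← Finset.add_sum_Ioc_eq_sum_Icc n.zero_le, hp0, one_mul, tsub_zero]
        rfl
    _ = ∑ i ∈ Finset.range (n + 1), (p.reflect n).coeff (n - i) * h ^ (n - i) := by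
        rw [← Nat.range_succ_eq_Icc_zero]
        refine Finset.sum_congr rfl fun i hi => ?_
        rw [Polynomial.coeff_reflect, Polynomial.revAt_le (n.sub_le i),
          tsub_tsub_cancel_of_le (Nat.lt_succ_iff.1 (Finset.mem_range.1 hi))]
    _ = 0 := by
        rw [← h0, Polynomial.eval_eq_sum_range' hdeg]
        exact Finset.sum_range_reflect (fun i => (p.reflect n).coeff i * h ^ i) (n + 1)

/-- The evaluation `∑ cᵢ Tⁱ ↦ ∑ cᵢ / hⁱ` from the Rees algebra of `I` to `A[1/h]`. -/
noncomputable def reesEval (I : Ideal A) (h : A) : reesAlgebra I →ₐ[A] Localization.Away h :=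
  (Polynomial.aeval (IsLocalization.Away.invSelf h)).comp (reesAlgebra I).val

/-- The affine chart `A[I/h]` of the blowup of `I + (h)` on which `h` generates the exceptional
divisor, realised as a subalgebra of `A[1/h]`. -/
noncomputable abbrev blowupChart (I : Ideal A) (h : A) : Subalgebra A (Localization.Away h) :=
  (reesEval I h).range

/-- The ideal of elements of positive degree in the Rees algebra of `I`. -/
noncomputable def reesIrrelevantIdeal (I : Ideal A) : Ideal (reesAlgebra I) :=
  RingHom.ker (Polynomial.constantCoeff.comp (reesAlgebra I).val.toRingHom)

/-- The ideal of `A[I/h]` generated by the fractions `g/h` with `g ∈ I`, encoded as the image of the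
irrelevant ideal of the Rees algebra. -/
noncomputable def ratioIdeal (I : Ideal A) (h : A) : Ideal (blowupChart I h) :=
  (reesIrrelevantIdeal I).map (reesEval I h).rangeRestrict

lemma mem_reesIrrelevantIdeal {p : reesAlgebra I} :
    p ∈ reesIrrelevantIdeal I ↔ (p : Polynomial A).coeff 0 = 0 :=
  Iff.rfl

lemma IntegralOverIdeal.of_ratioIdeal_eq_top (htop : ratioIdeal I h = ⊤) :
    IntegralOverIdeal I h := by
  obtain ⟨p, hp, hp1⟩ := (Ideal.mem_map_iff_of_surjective _
    (reesEval I h).rangeRestrict_surjective).1 ((Ideal.eq_top_iff_one _).1 htop)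
  have hp1 : reesEval I h p = 1 := congrArg Subtype.val hp1
  have hcoeff : (1 - p : Polynomial A).coeff 0 = 1 := by
    rw [Polynomial.coeff_sub, mem_reesIrrelevantIdeal.1 hp, sub_zero, Polynomial.coeff_one_zero]
  have heval : reesEval I h (1 - p) = 0 := by rw [map_sub, map_one, hp1, sub_self]
  obtain ⟨n, hn, hdeg, h0⟩ := exists_eval_reflect_eq_zero_of_aeval_invSelf_eq_zero heval
  exact .of_eval_reflect_eq_zero (1 - p).2 hcoeff hn hdeg h0

instance [IsNoetherianRing A] : IsNoetherianRing (blowupChart I h) :=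
  isNoetherianRing_of_surjective _ _ (reesEval I h).rangeRestrict.toRingHom
    (reesEval I h).rangeRestrict_surjective

lemma algebraMap_blowupChart_mem_nonZeroDivisors :
    algebraMap A (blowupChart I h) h ∈ nonZeroDivisors (blowupChart I h) := by
  have hunit : IsUnit (algebraMap A (Localization.Away h) h) :=
    IsLocalization.Away.algebraMap_isUnit h
  exact mem_nonZeroDivisors_of_injective (f := (blowupChart I h).val)
    Subtype.val_injective hunit.mem_nonZeroDivisors

lemma exists_sub_algebraMap_mem_ratioIdeal (b : blowupChart I h) :
    ∃ a : A, b - algebraMap A (blowupChart I h) a ∈ ratioIdeal I h := by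
  obtain ⟨p, rfl⟩ := (reesEval I h).rangeRestrict_surjective b
  refine ⟨(p : Polynomial A).coeff 0, ?_⟩
  rw [← (reesEval I h).rangeRestrict.commutes, ← map_sub]
  refine Ideal.mem_map_of_mem _ (mem_reesIrrelevantIdeal.2 ?_)
  change (p - Polynomial.C ((p : Polynomial A).coeff 0)).coeff 0 = 0
  rw [Polynomial.coeff_sub, Polynomial.coeff_C_zero, sub_self]

lemma exists_mem_ratioIdeal_mul_eq {g : A} (hg : g ∈ I) :
    ∃ b ∈ ratioIdeal I h,
      b * algebraMap A (blowupChart I h) h = algebraMap A (blowupChart I h) g := by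
  let e : reesAlgebra I :=
    ⟨Polynomial.monomial 1 g, reesAlgebra.monomial_mem.2 (by rwa [pow_one])⟩
  refine ⟨(reesEval I h).rangeRestrict e, Ideal.mem_map_of_mem _ <|
    mem_reesIrrelevantIdeal.2 (Polynomial.coeff_monomial_of_ne g one_ne_zero.symm),
    Subtype.ext ?_⟩
  change Polynomial.aeval (IsLocalization.Away.invSelf h) (Polynomial.monomial 1 g) *
    algebraMap A (Localization.Away h) h = algebraMap A (Localization.Away h) g
  rw [Polynomial.aeval_monomial, pow_one, mul_assoc, mul_comm (IsLocalization.Away.invSelf h),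
    IsLocalization.Away.mul_invSelf, mul_one]

variable {k : Type*} [Field k] [Algebra k A]

lemma surjective_algebraMap_quotient_of_ratioIdeal_le
    (hres : ∀ m : Ideal A, m.IsMaximal → Function.Surjective (algebraMap k (A ⧸ m)))
    {N : Ideal (blowupChart I h)} [N.IsMaximal] (hN : ratioIdeal I h ≤ N) :
    Function.Surjective (algebraMap k (blowupChart I h ⧸ N)) := by
  have hA : Function.Surjective (algebraMap A (blowupChart I h ⧸ N)) := by
    intro x
    obtain ⟨b, rfl⟩ := Ideal.Quotient.mk_surjective x
    obtain ⟨a, ha⟩ := exists_sub_algebraMap_mem_ratioIdeal b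
    exact ⟨a, (Ideal.Quotient.eq.2 (hN ha)).symm⟩
  have hmax : (RingHom.ker (algebraMap A (blowupChart I h ⧸ N))).IsMaximal := by
    let _ : Field (blowupChart I h ⧸ N) := Ideal.Quotient.field N
    exact RingHom.ker_isMaximal_of_surjective _ hA
  intro x
  obtain ⟨a, rfl⟩ := hA x
  obtain ⟨c, hc⟩ := hres _ hmax (Ideal.Quotient.mk _ a)
  refine ⟨c, ?_⟩
  rw [IsScalarTower.algebraMap_apply k A, ← sub_eq_zero, ← map_sub]
  exact Ideal.Quotient.eq.1 hc

lemma exists_algHom_powerSeries_map_le_of_not_integralOverIdeal [IsAlgClosed k] [IsNoetherianRing A]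
    (hres : ∀ m : Ideal A, m.IsMaximal → Function.Surjective (algebraMap k (A ⧸ m)))
    (hI : ¬ IntegralOverIdeal I h) :
    ∃ σ : A →ₐ[k] k⟦X⟧, σ h ≠ 0 ∧
      I.map (σ : A →+* k⟦X⟧) ≤ Ideal.span {PowerSeries.X * σ h} := by
  obtain ⟨N, hmax, hN⟩ := (ratioIdeal I h).exists_le_maximal
    fun htop => hI (.of_ratioIdeal_eq_top htop)
  obtain ⟨ρ, hρN, hρh⟩ := exists_algHom_powerSeries_ne_zero_of_isMaximal N
    (surjective_algebraMap_quotient_of_ratioIdeal_le hres hN)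
    algebraMap_blowupChart_mem_nonZeroDivisors
  refine ⟨ρ.comp (IsScalarTower.toAlgHom k A (blowupChart I h)), hρh,
    Ideal.map_le_iff_le_comap.2 fun g hg => Ideal.mem_span_singleton.2 ?_⟩
  obtain ⟨b, hb, hbg⟩ := exists_mem_ratioIdeal_mul_eq (h := h) hg
  change _ ∣ ρ (algebraMap A (blowupChart I h) g)
  rw [← hbg, map_mul]
  exact mul_dvd_mul_right (hρN b (hN hb)) _

end BlowupChart

theorem integralOverIdeal_iff_powerSeries_general {k A : Type*} [Field k] [IsAlgClosed k]
    [CommRing A] [IsNoetherianRing A] [Algebra k A]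
    (hres : ∀ m : Ideal A, m.IsMaximal → Function.Surjective (algebraMap k (A ⧸ m)))
    (I : Ideal A) (h : A) :
    IntegralOverIdeal I h ↔
      ∀ ρ : A →ₐ[k] k⟦X⟧, ρ h ∈ Ideal.map (ρ : A →+* k⟦X⟧) I := by
  refine ⟨fun hI ρ => ?_, fun hρ => ?_⟩
  · obtain ⟨g, hg⟩ := IsPrincipalIdealRing.principal (I.map (ρ : A →+* k⟦X⟧))
    have hint := hI.map (ρ : A →+* k⟦X⟧)
    rw [hg] at hint ⊢
    exact Ideal.mem_span_singleton.2 hint.dvd_of_span_singleton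
  · by_contra hI
    obtain ⟨σ, hσ, hle⟩ := exists_algHom_powerSeries_map_le_of_not_integralOverIdeal hres hI
    have hdvd : PowerSeries.X * σ h ∣ 1 * σ h := by
      rw [one_mul]
      exact Ideal.mem_span_singleton.1 (hle (hρ σ))
    exact PowerSeries.X_prime.not_isUnit (isUnit_of_dvd_one ((mul_dvd_mul_iff_right hσ).1 hdvd))

/-- Proposition 5.4, algebraic valuative criterion for integral closure:
let `k` be an algebraically closed field and `(A,m,k)` the local ring of an algebraic
variety over `k` (a reduced Noetherian local `k`-algebra, essentially of finite type, with
residue field `k`).  For an ideal `I` and `h ∈ A`, `h ∈ Ī` iff for every local `k`-algebra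
homomorphism `ρ : A → k[[z]]` one has `ρ(h) ∈ ρ(I)·k[[z]]`. -/
theorem integralOverIdeal_iff_powerSeries {k A : Type*} [Field k] [IsAlgClosed k]
    [CommRing A] [IsReduced A] [IsNoetherianRing A] [IsLocalRing A]
    [Algebra k A] [Algebra.EssFiniteType k A]
    (hres : ∀ x : A, ∃ c : k, x - algebraMap k A c ∈ IsLocalRing.maximalIdeal A)
    (I : Ideal A) (h : A) :
    IntegralOverIdeal I h ↔
      ∀ ρ : A →ₐ[k] PowerSeries k,
        (∀ x ∈ IsLocalRing.maximalIdeal A,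
          ρ x ∈ Ideal.span {(PowerSeries.X : PowerSeries k)}) →
        ρ h ∈ Ideal.map (ρ : A →+* PowerSeries k) I := by
  have hsurj (m : Ideal A) (hm : m.IsMaximal) : Function.Surjective (algebraMap k (A ⧸ m)) := by
    intro y
    obtain ⟨x, rfl⟩ := Ideal.Quotient.mk_surjective y
    obtain ⟨c, hc⟩ := hres x
    exact ⟨c, (Ideal.Quotient.eq.2 (IsLocalRing.eq_maximalIdeal hm ▸ hc)).symm⟩
  rw [integralOverIdeal_iff_powerSeries_general hsurj]
  exact forall_congr' fun ρ => ⟨fun H _ => H, fun H => H fun x hx =>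
    Ideal.mem_span_singleton.2 (X_dvd_of_mem_maximalIdeal ρ hx)⟩
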